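/- arXiv:2510.10213 — 3 statements merged into one kernel-verified Lean document; each statement's English description precedes it below -/
import Mathlib

section
/- Let C : Matrix (Fin n) (Fin n) (ZMod 3) be symmetric of rank r, and let S, T ⊆ Fin n be two subsets with |S| = |T| = r such that the principal submatrices C[S,S] and C[T,T] both have nonzero determinant. Then det C[S,S] = det C[T,T] in ZMod 3. -/
/-!
The rows of `C` indexed by `S` are independent (already their restrictions to the columns in `S`
are) and there are `rank C` of them, so they span the row space: `C = X * C[S,·]` for some `X`.
By symmetry, restricting to the rows and columns in `T` gives
`C[T,T] = X_T * C[S,S] * X_Tᵀ`. Hence the two determinants differ by the square of `det X_T`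
(after identifying `T` with `S` by a bijection), and a nonzero square in `ZMod 3` is `1`.
-/

/-- The principal submatrix of `C` with rows and columns indexed by `S`. -/
def principalSub {n : ℕ} (C : Matrix (Fin n) (Fin n) (ZMod 3)) (S : Finset (Fin n)) :
    Matrix {i // i ∈ S} {i // i ∈ S} (ZMod 3) :=
  C.submatrix (fun i => (i : Fin n)) (fun i => (i : Fin n))

/-- The rows in `S` generate all rows of `C`. -/
lemma exists_row_coeffs {n : ℕ} (C : Matrix (Fin n) (Fin n) (ZMod 3))
    (S : Finset (Fin n)) (hS : S.card = C.rank) (hdetS : (principalSub C S).det ≠ 0) :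
    ∃ X : Matrix (Fin n) {i // i ∈ S} (ZMod 3),
      ∀ i j, C i j = ∑ s : {i // i ∈ S}, X i s * C s j := by
  have hli : LinearIndependent (ZMod 3) (fun s : {i // i ∈ S} => C.row s) := by
    have h : LinearIndependent (ZMod 3) (principalSub C S).row :=
      Matrix.linearIndependent_rows_of_det_ne_zero hdetS
    exact LinearIndependent.of_comp
      (LinearMap.funLeft (ZMod 3) (ZMod 3) (fun i : {i // i ∈ S} => (i : Fin n))) h
  have hspan : Submodule.span (ZMod 3) (Set.range fun s : {i // i ∈ S} => C.row s) =
      Submodule.span (ZMod 3) (Set.range C.row) := by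
    apply Submodule.eq_of_le_of_finrank_eq
    · apply Submodule.span_mono
      rintro _ ⟨s, rfl⟩
      exact ⟨s, rfl⟩
    · rw [finrank_span_eq_card hli, ← Matrix.rank_eq_finrank_span_row, ← hS]
      simp
  have hmem : ∀ i, ∃ c : {i // i ∈ S} → ZMod 3, ∑ s, c s • C.row s = C.row i := fun i => by
    rw [← Submodule.mem_span_range_iff_exists_fun, hspan]
    exact Submodule.subset_span ⟨i, rfl⟩
  choose X hX using hmem
  refine ⟨X, fun i j => ?_⟩
  have h := congrFun (hX i) j
  simpa [Finset.sum_apply, Matrix.row] using h.symm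

/-- For a symmetric matrix `C` of rank `r`, any two nonsingular principal `r × r`
submatrices have the same determinant. -/
theorem principal_minor_independent {n : ℕ} (C : Matrix (Fin n) (Fin n) (ZMod 3))
    (hC : C.IsSymm) (r : ℕ) (hr : C.rank = r)
    (S T : Finset (Fin n)) (hS : S.card = r) (hT : T.card = r)
    (hdetS : (principalSub C S).det ≠ 0) (hdetT : (principalSub C T).det ≠ 0) :
    (principalSub C S).det = (principalSub C T).det := by
  obtain ⟨X, hX⟩ := exists_row_coeffs C S (hS.trans hr.symm) hdetS
  have e : {i // i ∈ S} ≃ {i // i ∈ T} := Fintype.equivOfCardEq (by simp [hS, hT])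
  let Y : Matrix {i // i ∈ S} {i // i ∈ S} (ZMod 3) := Matrix.of fun s t => X (e s) t
  have hfac : (principalSub C T).submatrix e e = Y * (principalSub C S * Y.transpose) := by
    ext a b
    simp only [principalSub, Matrix.submatrix_apply, Matrix.mul_apply, Matrix.transpose_apply, Y,
      Matrix.of_apply]
    rw [hX]
    refine Finset.sum_congr rfl fun s _ => ?_
    rw [← hC.apply, hX]
    congr 1
    refine Finset.sum_congr rfl fun t _ => ?_
    rw [hC.apply, mul_comm]
  have hdet : (principalSub C T).det = Y.det * ((principalSub C S).det * Y.det) := by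
    rw [← Matrix.det_submatrix_equiv_self e, hfac, Matrix.det_mul, Matrix.det_mul,
      Matrix.det_transpose]
  rw [hdet] at hdetT ⊢
  generalize Y.det = y at *
  generalize (principalSub C S).det = d at *
  clear hdet
  revert y d
  decide +revert
end

section
/- Let G be a connected finite simple graph on a finite vertex type V with edge weights x : Sym2 V → ZMod 3, let L(G;x) be its weighted Laplace–Kirchhoff matrix, and let v₀ ∈ V. Then the determinant of the matrix obtained from L(G;x) by deleting the row and column indexed by v₀ equals the spanning-tree sum s(G;x). -/
/-!
The determinant is expanded along choices of an outgoing edge at every vertex. Write `e v` for the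
standard basis row of the reduced matrix, with `e v₀ = 0`. The row of the reduced Laplacian indexed
by `i ≠ v₀` is the sum over the neighbours `u` of `i` of `x s(i, u) • (e i - e u)`, so by
multilinearity the determinant is the sum over all maps `f : {v // v ≠ v₀} → V` of
`∏ i, x s(i, f i)` (restricted to maps along edges of `G`) times the determinant of the matrix
`stepMatrix f` with rows `e i - e (f i)`.

Call `f` *rooted* if following it leads every vertex to `v₀`. If `f` is rooted, `stepMatrix f` is
triangular with respect to the height above `v₀` and has determinant `1`; otherwise the indicator
vector of the vertices that never arrive at `v₀` lies in its kernel, and the determinant is `0`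
(`det_stepMatrix`).

It remains to match rooted maps along edges of `G` with spanning trees. A rooted map `f` gives the
graph `parentGraph f` with edges `s(i, f i)`; it is connected and has at most `card V - 1` edges,
hence is a tree, and `i ↦ s(i, f i)` is injective. The map `f` is recovered from the tree
(`parentGraph_injective`), and every spanning tree arises by sending each vertex to a neighbour
closer to `v₀` (`exists_parent`).
-/

open scoped Classical

/-- The weighted Laplace–Kirchhoff matrix of a graph `G` with edge weights `x`. -/
noncomputable def lap {V : Type*} [Fintype V] [DecidableEq V] (G : SimpleGraph V)
    (x : Sym2 V → ZMod 3) : Matrix V V (ZMod 3) :=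
  fun v w =>
    if v = w then ∑ u ∈ Finset.univ.filter (fun u => G.Adj v u), x s(v, u)
    else if G.Adj v w then - x s(v, w) else 0

/-- The spanning-tree sum `s(G;x)`: the sum over all spanning trees `T` of `G`
(spanning subgraphs of `G` that are connected and acyclic) of the products of
the weights of the edges of `T`. -/
noncomputable def treeSum {V : Type*} [Fintype V] [DecidableEq V] (G : SimpleGraph V)
    (x : Sym2 V → ZMod 3) : ZMod 3 :=
  ∑ T ∈ Finset.univ.filter
      (fun T : SimpleGraph V => T ≤ G ∧ T.Connected ∧ T.IsAcyclic),
    ∏ e ∈ T.edgeFinset, x e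

section MatrixTree

variable {V : Type*} {v₀ : V}

/-! ### Rooted maps and their determinants -/

/-- The map `f` leads every vertex to the root `v₀`, expressed by a height function that strictly
decreases along `f`. -/
def Rooted (f : {v : V // v ≠ v₀} → V) : Prop :=
  ∃ d : V → ℕ, ∀ i : {v : V // v ≠ v₀}, d (f i) < d i

/-- If `f` is not rooted, then some nonempty set of vertices avoiding `v₀` is both forward and
backward invariant under `f`: the vertices whose orbit never meets `v₀`. -/
lemma exists_invariant_of_not_rooted (f : {v : V // v ≠ v₀} → V) (hf : ¬ Rooted f) :
    ∃ S : Set V, v₀ ∉ S ∧ S.Nonempty ∧ ∀ i : {v : V // v ≠ v₀}, f i ∈ S ↔ (i : V) ∈ S := by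
  set F : V → V := fun v => if h : v ≠ v₀ then f ⟨v, h⟩ else v₀ with hF
  have hFi (i : {v : V // v ≠ v₀}) : F i = f i := by simp [hF, i.2]
  refine ⟨{v | ∀ n, F^[n] v ≠ v₀}, fun h => h 0 rfl, ?_, fun i => ?_⟩
  · by_contra hne
    rw [Set.not_nonempty_iff_eq_empty, Set.eq_empty_iff_forall_notMem] at hne
    simp only [Set.mem_ofPred_eq, not_forall, not_not] at hne
    refine hf ⟨fun v => Nat.find (hne v), fun i => ?_⟩
    have hi := Nat.find_spec (hne i)
    cases hn : Nat.find (hne i) with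
    | zero => rw [hn] at hi; exact absurd hi i.2
    | succ m =>
      rw [hn, Function.iterate_succ_apply, hFi] at hi
      exact (Nat.lt_succ_of_le (Nat.find_min' (hne (f i)) hi)).trans_eq hn.symm
  · constructor
    · rintro h (_ | n)
      · exact i.2
      · rw [Function.iterate_succ_apply, hFi]; exact h n
    · intro h n
      have := h (n + 1)
      rwa [Function.iterate_succ_apply, hFi] at this

/-- The matrix whose row `i` is `e i - e (f i)`, where `e v₀ = 0`. -/
def stepMatrix [DecidableEq V] (f : {v : V // v ≠ v₀} → V) :
    Matrix {v : V // v ≠ v₀} {v : V // v ≠ v₀} (ZMod 3) :=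
  fun i j => (if i = j then 1 else 0) - (if f i = j then 1 else 0)

lemma det_stepMatrix [Fintype V] [DecidableEq V] (f : {v : V // v ≠ v₀} → V) :
    (stepMatrix f).det = if Rooted f then 1 else 0 := by
  have : Fact (Nat.Prime 3) := ⟨Nat.prime_three⟩
  split_ifs with hf
  · obtain ⟨d, hd⟩ := hf
    have hb : (stepMatrix f).BlockTriangular
        (fun i : {v : V // v ≠ v₀} => OrderDual.toDual (d i)) := by
      intro i j hij
      have hij' : d i < d j := hij
      have h1 : i ≠ j := by rintro rfl; exact lt_irrefl _ hij'
      have h2 : f i ≠ j := by intro h; have := hd i; rw [h] at this; omega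
      simp [stepMatrix, h1, h2]
    rw [hb.det]
    refine Finset.prod_eq_one fun a _ => ?_
    -- within a level of constant height the matrix is the identity
    have : (stepMatrix f).toSquareBlock
        (fun i : {v : V // v ≠ v₀} => OrderDual.toDual (d i)) a = 1 := by
      ext ⟨i, hi⟩ ⟨j, hj⟩
      have hij : d i = d j := OrderDual.toDual.injective (hi.trans hj.symm)
      have h2 : f i ≠ j := by intro h; have := hd i; rw [h] at this; omega
      simp [Matrix.toSquareBlock, Matrix.toSquareBlockProp, stepMatrix, h2, Matrix.one_apply]
    rw [this, Matrix.det_one]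
  · obtain ⟨S, h0, ⟨s, hs⟩, hS⟩ := exists_invariant_of_not_rooted f hf
    rw [← Matrix.exists_mulVec_eq_zero_iff]
    refine ⟨fun j => if (j : V) ∈ S then 1 else 0, fun h => ?_, ?_⟩
    · have := congrFun h ⟨s, fun h => h0 (h ▸ hs)⟩
      simp [hs] at this
    · ext i
      have h2 : (∑ j : {v : V // v ≠ v₀}, if f i = j then (if (j : V) ∈ S then (1 : ZMod 3) else 0)
          else 0) = if f i ∈ S then 1 else 0 := by
        by_cases hi : f i = v₀
        · rw [Finset.sum_eq_zero]
          · simp [hi, h0]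
          · intro j _
            rw [if_neg]
            rw [hi]; exact j.2.symm
        · rw [Finset.sum_eq_single ⟨f i, hi⟩]
          · simp
          · intro j _ hj
            rw [if_neg]
            intro h; exact hj (Subtype.ext h.symm)
          · simp
      simp only [Matrix.mulVec, dotProduct, stepMatrix, sub_mul, Finset.sum_sub_distrib, ite_mul,
        one_mul, zero_mul, h2, hS]
      simp

/-! ### Rooted maps and spanning trees -/

/-- The graph with an edge joining `i` to `f i` for every `i ≠ v₀`; fixed points of `f` give
no edge. -/
def parentGraph (f : {v : V // v ≠ v₀} → V) : SimpleGraph V :=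
  SimpleGraph.fromEdgeSet (Set.range fun i : {v : V // v ≠ v₀} => s((i : V), f i))

lemma Rooted.ne {f : {v : V // v ≠ v₀} → V} (hf : Rooted f)
    (i : {v : V // v ≠ v₀}) : (i : V) ≠ f i := by
  obtain ⟨d, hd⟩ := hf
  intro h
  have := hd i
  rw [← h] at this
  exact lt_irrefl _ this

lemma Rooted.parentGraph_adj {f : {v : V // v ≠ v₀} → V} (hf : Rooted f)
    (i : {v : V // v ≠ v₀}) :
    (parentGraph f).Adj i (f i) := by
  simp only [parentGraph, SimpleGraph.fromEdgeSet_adj]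
  exact ⟨⟨i, rfl⟩, hf.ne i⟩

lemma parentGraph_adj_cases {f : {v : V // v ≠ v₀} → V} {a b : V} (h : (parentGraph f).Adj a b) :
    (∃ i : {v : V // v ≠ v₀}, (i : V) = a ∧ f i = b) ∨
      ∃ i : {v : V // v ≠ v₀}, (i : V) = b ∧ f i = a := by
  simp only [parentGraph, SimpleGraph.fromEdgeSet_adj] at h
  obtain ⟨⟨i, hi⟩, -⟩ := h
  rcases Sym2.eq_iff.1 hi with ⟨h1, h2⟩ | ⟨h1, h2⟩
  · exact Or.inl ⟨i, h1, h2⟩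
  · exact Or.inr ⟨i, h1, h2⟩

lemma Rooted.edgeSet {f : {v : V // v ≠ v₀} → V} (hf : Rooted f) :
    (parentGraph f).edgeSet = Set.range fun i : {v : V // v ≠ v₀} => s((i : V), f i) := by
  rw [parentGraph, SimpleGraph.edgeSet_fromEdgeSet, sdiff_eq_left, Set.disjoint_left]
  rintro _ ⟨i, rfl⟩ h
  exact hf.ne i (by simpa using h)

lemma Rooted.connected {f : {v : V // v ≠ v₀} → V} (hf : Rooted f) :
    (parentGraph f).Connected := by
  obtain ⟨d, hd⟩ := id hf
  have key : ∀ n v, d v = n → (parentGraph f).Reachable v v₀ := by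
    intro n
    induction n using Nat.strong_induction_on with
    | _ n ih =>
      intro v hv
      by_cases h : v = v₀
      · rw [h]
      · exact (hf.parentGraph_adj ⟨v, h⟩).reachable.trans (ih _ (hv ▸ hd ⟨v, h⟩) _ rfl)
  have : Nonempty V := ⟨v₀⟩
  exact ⟨fun a b => (key _ a rfl).trans (key _ b rfl).symm⟩

lemma card_ne_add_one [Fintype V] : Nat.card {v : V // v ≠ v₀} + 1 = Nat.card V := by
  classical
  have : Nonempty V := ⟨v₀⟩
  have : 0 < Fintype.card V := Fintype.card_pos
  simp only [Nat.card_eq_fintype_card]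
  rw [Fintype.card_subtype_compl, Fintype.card_subtype_eq]
  omega

/-- A connected graph has at least `card V - 1` edges, and `parentGraph f` has at most that many. -/
lemma Rooted.card_edgeSet [Fintype V] {f : {v : V // v ≠ v₀} → V} (hf : Rooted f) :
    Nat.card (parentGraph f).edgeSet = Nat.card {v : V // v ≠ v₀} := by
  have h1 := hf.connected.card_vert_le_card_edgeSet_add_one
  have h2 := card_ne_add_one (v₀ := v₀)
  have h3 : Nat.card (parentGraph f).edgeSet ≤ Nat.card {v : V // v ≠ v₀} := by
    rw [hf.edgeSet]
    exact Finite.card_range_le _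
  omega

lemma Rooted.isTree [Fintype V] {f : {v : V // v ≠ v₀} → V} (hf : Rooted f) :
    (parentGraph f).IsTree := by
  rw [SimpleGraph.isTree_iff_connected_and_card]
  exact ⟨hf.connected, by rw [hf.card_edgeSet, card_ne_add_one]⟩

lemma Rooted.edge_injective {f : {v : V // v ≠ v₀} → V} (hf : Rooted f) :
    Function.Injective fun i : {v : V // v ≠ v₀} => s((i : V), f i) := by
  obtain ⟨d, hd⟩ := hf
  intro i j hij
  rcases Sym2.eq_iff.1 hij with ⟨h1, -⟩ | ⟨h1, h2⟩
  · exact Subtype.ext h1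
  · -- otherwise `i` and `j` would be parents of each other
    have hi := hd i
    have hj := hd j
    rw [← h1] at hj
    rw [h2] at hi
    omega

/-- By induction on the height of `i` for `g`: if `g i` were not `f i`, then the edge `s(i, g i)`
would come from `f (g i) = i`; as `f` and `g` agree at the lower vertex `g i`, this gives
`g (g i) = i`, against the decrease of the height. -/
lemma parentGraph_injective {f g : {v : V // v ≠ v₀} → V} (hg : Rooted g)
    (h : parentGraph f = parentGraph g) : f = g := by
  obtain ⟨d, hd⟩ := id hg
  have key : ∀ (n : ℕ) (i : {v : V // v ≠ v₀}), d i = n → f i = g i := by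
    intro n
    induction n using Nat.strong_induction_on with
    | _ n ih =>
      rintro i rfl
      have hadj := hg.parentGraph_adj i
      rw [← h] at hadj
      rcases parentGraph_adj_cases hadj with ⟨j, hj, hfj⟩ | ⟨j, hj, hfj⟩
      · rw [Subtype.ext hj] at hfj
        exact hfj
      · have hlt := hd i
        rw [← hj] at hlt
        have hfg := ih _ hlt j rfl
        have hlt' := hd j
        rw [← hfg, hfj] at hlt'
        omega
  exact funext fun i => key _ i rfl

/-- In a connected graph every vertex other than `v₀` has a neighbour closer to `v₀`. -/
lemma exists_parent {T : SimpleGraph V} (hT : T.Connected) (v₀ : V) :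
    ∃ f : {v : V // v ≠ v₀} → V, Rooted f ∧ ∀ i : {v : V // v ≠ v₀}, T.Adj i (f i) := by
  have : ∀ i : {v : V // v ≠ v₀}, ∃ u, T.Adj i u ∧ T.dist u v₀ < T.dist i v₀ := by
    rintro ⟨i, hi⟩
    obtain ⟨p, hp⟩ := hT.exists_walk_length_eq_dist i v₀
    cases p with
    | nil => exact absurd rfl hi
    | cons hadj q =>
      refine ⟨_, hadj, ?_⟩
      have := SimpleGraph.dist_le q
      change _ < T.dist i v₀
      change _ = T.dist i v₀ at hp
      rw [SimpleGraph.Walk.length_cons] at hp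
      omega
  choose f hf using this
  exact ⟨f, ⟨fun v => T.dist v v₀, fun i => (hf i).2⟩, fun i => (hf i).1⟩

lemma parentGraph_le {f : {v : V // v ≠ v₀} → V} {T : SimpleGraph V}
    (h : ∀ i : {v : V // v ≠ v₀}, T.Adj i (f i)) :
    parentGraph f ≤ T := by
  intro a b hab
  rcases parentGraph_adj_cases hab with ⟨i, rfl, rfl⟩ | ⟨i, rfl, rfl⟩
  · exact h i
  · exact (h i).symm

/-! ### Multilinear expansion of the reduced Laplacian -/

variable [Fintype V] [DecidableEq V]

/-- Each row of the reduced Laplacian as a sum over the possible outgoing edges at its vertex. -/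
lemma lap_row (G : SimpleGraph V) (x : Sym2 V → ZMod 3) (i j : {v : V // v ≠ v₀}) :
    lap G x i j = ∑ u, (if G.Adj i u then x s((i : V), u) else 0) *
      ((if i = j then 1 else 0) - (if u = j then 1 else 0)) := by
  simp only [mul_sub, Finset.sum_sub_distrib, lap]
  by_cases hij : i = j
  · subst hij
    simp [Finset.sum_filter]
  · have : (i : V) ≠ j := fun h => hij (Subtype.ext h)
    simp only [this, hij, if_false]
    simp
    split_ifs <;> simp

lemma det_expand (G : SimpleGraph V) (x : Sym2 V → ZMod 3) (v₀ : V) :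
    ((lap G x).submatrix
        (fun i : {v : V // v ≠ v₀} => (i : V))
        (fun i : {v : V // v ≠ v₀} => (i : V))).det
      = ∑ f : {v : V // v ≠ v₀} → V,
          (∏ i : {v : V // v ≠ v₀}, if G.Adj i (f i) then x s((i : V), f i) else 0) *
            (stepMatrix f).det := by
  have h : (lap G x).submatrix
        (fun i : {v : V // v ≠ v₀} => (i : V))
        (fun i : {v : V // v ≠ v₀} => (i : V)) = fun i : {v : V // v ≠ v₀} => ∑ u : V,
          (if G.Adj i u then x s((i : V), u) else 0) •
          (fun j : {v : V // v ≠ v₀} => (if i = j then (1 : ZMod 3) else 0)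
            - (if u = j then 1 else 0)) := by
    ext i j
    rw [Matrix.submatrix_apply, lap_row]
    simp only [Finset.sum_apply, Pi.smul_apply, smul_eq_mul]
  rw [h]
  refine (Matrix.detRowAlternating.toMultilinearMap.map_sum _).trans ?_
  refine Finset.sum_congr rfl fun f _ => ?_
  exact Matrix.detRowAlternating.toMultilinearMap.map_smul_univ _ _

end MatrixTree

/-- The Matrix-Tree theorem with weights in `ZMod 3`: deleting the row and the
column of the Laplacian indexed by any vertex `v₀` gives a matrix whose
determinant is the spanning-tree sum. -/
theorem matrix_tree {V : Type*} [Fintype V] [DecidableEq V] (G : SimpleGraph V)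
    (hG : G.Connected) (x : Sym2 V → ZMod 3) (v₀ : V) :
    ((lap G x).submatrix
        (fun i : {v : V // v ≠ v₀} => (i : V))
        (fun i : {v : V // v ≠ v₀} => (i : V))).det
      = treeSum G x := by
  rw [det_expand]
  have hterm : ∀ f : {v : V // v ≠ v₀} → V,
      (∏ i : {v : V // v ≠ v₀}, if G.Adj i (f i) then x s((i : V), f i) else 0) *
        (stepMatrix f).det
        = if Rooted f ∧ ∀ i : {v : V // v ≠ v₀}, G.Adj i (f i) then
            ∏ i : {v : V // v ≠ v₀}, x s((i : V), f i) else 0 := by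
    intro f
    rw [det_stepMatrix]
    by_cases h1 : Rooted f
    · by_cases h2 : ∀ i : {v : V // v ≠ v₀}, G.Adj i (f i)
      · simp [h1, h2]
      · obtain ⟨i, hi⟩ := not_forall.1 h2
        rw [if_neg (fun h : _ ∧ _ => h2 h.2),
          Finset.prod_eq_zero (Finset.mem_univ i) (if_neg hi), zero_mul]
    · simp [h1]
  rw [Finset.sum_congr rfl fun f _ => hterm f, ← Finset.sum_filter, treeSum]
  refine Finset.sum_bij (fun f _ => parentGraph f) ?_ ?_ ?_ ?_
  · intro f hf
    obtain ⟨h1, h2⟩ := (Finset.mem_filter.1 hf).2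
    exact Finset.mem_filter.2 ⟨Finset.mem_univ _, parentGraph_le h2, h1.connected,
      h1.isTree.isAcyclic⟩
  · intro f hf g hg h
    exact parentGraph_injective (Finset.mem_filter.1 hg).2.1 h
  · intro T hT
    obtain ⟨hle, hc, ha⟩ := (Finset.mem_filter.1 hT).2
    obtain ⟨f, hf, hadj⟩ := exists_parent hc v₀
    refine ⟨f, Finset.mem_filter.2 ⟨Finset.mem_univ _, hf, fun i => hle (hadj i)⟩, ?_⟩
    -- a tree has no proper connected spanning subgraph
    have hmin := SimpleGraph.isTree_iff_minimal_connected.1 ⟨hc, ha⟩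
    exact le_antisymm (parentGraph_le hadj) (hmin.2 hf.connected (parentGraph_le hadj))
  · intro f hf
    have h1 := (Finset.mem_filter.1 hf).2.1
    have : (parentGraph f).edgeFinset
        = Finset.univ.image fun i : {v : V // v ≠ v₀} => s((i : V), f i) := by
      apply Finset.coe_injective
      rw [SimpleGraph.coe_edgeFinset, h1.edgeSet]
      simp
    rw [this, Finset.prod_image fun i _ j _ h => h1.edge_injective h]
end

section
/- Let G be a finite simple graph on a finite vertex type V with edge weights x : Sym2 V → ZMod 3, let L(G;x) be its weighted Laplace–Kirchhoff matrix, and let W ⊆ V be a nonempty subset. Then the determinant of the principal submatrix of L(G;x) whose rows and columns are indexed by V \ W equals the sum, over all edge sets F ⊆ E(G) such that the spanning subgraph (V,F) is acyclic and every connected component of (V,F) contains exactly one vertex of W, of ∏_{e ∈ F} x(e). (This sum is the spanning-tree sum s(G/W;x) of the graph obtained from G by contracting W to a single vertex.) -/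
/-!
The row of the reduced Laplacian at `v ∉ W` is the sum, over the neighbours `u` of `v`, of
`x(vu) • (e_v - e_u)`, where `e_u` is read as `0` for `u ∈ W`. Multilinearity of the determinant in
its rows therefore writes the minor as a sum over the maps `f : V \ W → V` that send every vertex
to a neighbour, the term of `f` being `∏ x(v, f v)` times the determinant of `stepMatrix f`, the
matrix with rows `e_v - e_{f v}`.

That determinant is `1` if iterating `f` leads from every vertex into `W` (`det_stepMatrix_good`),
and `0` otherwise, because the indicator vector of the vertices that never reach `W` is in the
kernel (`det_stepMatrix_not_good`). The maps of the first kind correspond bijectively to the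
forests in `contractedSum`: a map `f` gives the edge set `{s(v, f v)}` (`stepEdges_acyclic`,
`stepEdges_existsUnique`, `stepEdges_injective`), and a forest with one vertex of `W` in each
component comes from the map that moves every vertex one step towards its root
(`exists_good_stepEdges_eq`).
-/

open scoped Classical

/-- The contracted spanning-tree sum `s(G/W;x)` for a nonempty `W`: the sum over
all edge sets `F ⊆ E(G)` such that `(V,F)` is acyclic and every connected
component of `(V,F)` contains exactly one vertex of `W`, of `∏_{e ∈ F} x e`. -/
noncomputable def contractedSum {V : Type*} [Fintype V] [DecidableEq V] (G : SimpleGraph V)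
    (x : Sym2 V → ZMod 3) (W : Finset V) : ZMod 3 :=
  ∑ F ∈ G.edgeFinset.powerset.filter (fun F =>
      (SimpleGraph.fromEdgeSet (↑F : Set (Sym2 V))).IsAcyclic ∧
      ∀ v : V, ∃! w : V, w ∈ W ∧
        (SimpleGraph.fromEdgeSet (↑F : Set (Sym2 V))).Reachable v w),
    ∏ e ∈ F, x e

namespace MatrixTree

variable {V : Type*} [DecidableEq V] {W : Finset V}

/-! ### Maps leading into `W` -/

/-- The map `f` leads every vertex into `W`. This is encoded by a potential that drops strictly at
each application of `f`. -/
def Good (f : {v : V // v ∉ W} → V) : Prop :=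
  ∃ d : V → ℕ, ∀ v : {v : V // v ∉ W}, d (f v) < d v

/-- The extension of `f` to all of `V` that fixes every vertex of `W`. -/
noncomputable def ext (f : {v : V // v ∉ W} → V) (v : V) : V :=
  if h : v ∉ W then f ⟨v, h⟩ else v

lemma ext_coe (f : {v : V // v ∉ W} → V) (v : {v : V // v ∉ W}) : ext f v = f v := by
  simp [ext, v.2]

lemma ext_of_mem (f : {v : V // v ∉ W} → V) {v : V} (hv : v ∈ W) : ext f v = v := by
  simp [ext, hv]

lemma iterate_ext_of_mem (f : {v : V // v ∉ W} → V) {v : V} (hv : v ∈ W) (k : ℕ) :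
    (ext f)^[k] v = v :=
  Function.iterate_fixed (ext_of_mem f hv) k

lemma good_of_forall_exists_iterate (f : {v : V // v ∉ W} → V)
    (h : ∀ v, ∃ k, (ext f)^[k] v ∈ W) : Good f := by
  refine ⟨fun v => Nat.find (h v), fun v => ?_⟩
  have hs := Nat.find_spec (h v)
  have hpos : Nat.find (h v) ≠ 0 := by
    intro h0
    rw [h0] at hs
    exact v.2 hs
  obtain ⟨k, hk⟩ := Nat.exists_eq_succ_of_ne_zero hpos
  have : Nat.find (h (f v)) ≤ k := by
    apply Nat.find_min'
    rw [hk, Function.iterate_succ_apply, ext_coe] at hs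
    exact hs
  show Nat.find (h (f v)) < Nat.find (h v)
  omega

/-! ### The determinant attached to a map -/

/-- The matrix, indexed by the complement of `W`, whose row at `v` is `e_v - e_{f v}`, where `e_u`
stands for `0` if `u ∈ W`. -/
noncomputable def stepMatrix (f : {v : V // v ∉ W} → V) :
    Matrix {v : V // v ∉ W} {v : V // v ∉ W} (ZMod 3) :=
  fun v w => (if v = w then 1 else 0) - (if f v = w then 1 else 0)

/-- Only the identity permutation contributes: a contributing permutation sends `v` to `v` or to
`f v`, so it never raises the potential, while it preserves the sum of all potentials. -/
lemma det_stepMatrix_good [Fintype V] (f : {v : V // v ∉ W} → V) (hf : Good f) :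
    (stepMatrix f).det = 1 := by
  obtain ⟨d, hd⟩ := hf
  have hne : ∀ v, f v ≠ v := fun v h => by
    have := hd v
    rw [h] at this
    exact lt_irrefl _ this
  rw [← Matrix.det_transpose, Matrix.det_apply, Finset.sum_eq_single 1]
  · simp [stepMatrix, hne]
  · intro σ _ hσ
    suffices h : ∏ i, (stepMatrix f).transpose (σ i) i = 0 by rw [h, smul_zero]
    by_contra hprod
    have hval : ∀ v, σ v = v ∨ f v = σ v := by
      intro v
      by_contra! hcon
      refine hprod (Finset.prod_eq_zero (Finset.mem_univ v) ?_)
      simp [stepMatrix, Matrix.transpose, hcon.1.symm, hcon.2]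
    have hle : ∀ v ∈ (Finset.univ : Finset {v : V // v ∉ W}), d (σ v) ≤ d v := by
      intro v _
      rcases hval v with h | h
      · rw [h]
      · rw [← h]
        exact (hd v).le
    have hsum : ∑ v, d (σ v : {v : V // v ∉ W}) = ∑ v : {v : V // v ∉ W}, d v :=
      Equiv.sum_comp σ (fun v : {v : V // v ∉ W} => d v)
    have heq := (Finset.sum_eq_sum_iff_of_le hle).1 hsum
    apply hσ
    ext1 v
    rcases hval v with h | h
    · exact h
    · have h1 := heq v (Finset.mem_univ v)
      have h2 := hd v
      rw [h, h1] at h2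
      exact absurd h2 (lt_irrefl _)
  · simp

lemma det_stepMatrix_not_good [Fintype V] (f : {v : V // v ∉ W} → V) (hf : ¬ Good f) :
    (stepMatrix f).det = 0 := by
  obtain ⟨v₀, hv₀⟩ : ∃ v, ∀ k, (ext f)^[k] v ∉ W := by
    by_contra! h
    exact hf (good_of_forall_exists_iterate f h)
  have hstep : ∀ v : {v : V // v ∉ W},
      (∀ k, (ext f)^[k] v ∉ W) ↔ ∀ k, (ext f)^[k] (f v) ∉ W := by
    intro v
    constructor
    · intro h k
      have := h (k + 1)
      rwa [Function.iterate_succ_apply, ext_coe] at this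
    · rintro h (_ | k)
      · exact v.2
      · rw [Function.iterate_succ_apply, ext_coe]
        exact h k
  apply Matrix.exists_mulVec_eq_zero_iff.1
  refine ⟨fun v => if ∀ k, (ext f)^[k] (v : V) ∉ W then 1 else 0, ?_, ?_⟩
  · intro h
    have := congrFun h ⟨v₀, hv₀ 0⟩
    simp [hv₀] at this
  · funext v
    simp only [Matrix.mulVec, dotProduct, stepMatrix, sub_mul, Finset.sum_sub_distrib, ite_mul,
      one_mul, zero_mul, Finset.sum_ite_eq, Finset.mem_univ, if_true, Pi.zero_apply]
    by_cases hfv : f v ∈ W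
    · have h1 : ¬ ∀ k, (ext f)^[k] (v : V) ∉ W := by
        rw [hstep]
        exact fun h => h 0 hfv
      rw [if_neg h1, Finset.sum_eq_zero, sub_zero]
      intro w _
      rw [if_neg]
      intro h
      exact w.2 (h ▸ hfv)
    · rw [Finset.sum_eq_single (⟨f v, hfv⟩ : {v : V // v ∉ W})]
      · rw [if_pos rfl, if_congr (hstep v) rfl rfl, sub_self]
      · intro w _ hw
        rw [if_neg]
        intro h
        exact hw (Subtype.ext h.symm)
      · simp

/-! ### The forest of a map -/

/-- The edges `s(v, f v)` of the functional graph of `f`. -/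
noncomputable def stepEdges [Fintype V] (f : {v : V // v ∉ W} → V) : Finset (Sym2 V) :=
  Finset.univ.image fun v : {v : V // v ∉ W} => s((v : V), f v)

lemma mem_stepEdges [Fintype V] {f : {v : V // v ∉ W} → V} {e : Sym2 V} :
    e ∈ stepEdges f ↔ ∃ v : {v : V // v ∉ W}, s((v : V), f v) = e := by
  simp only [stepEdges, Finset.mem_image, Finset.mem_univ, true_and]

/-- Two vertices cannot be swapped by `f`, so each edge `s(v, f v)` determines `v`. -/
lemma Good.edge_injective {f : {v : V // v ∉ W} → V} (hf : Good f) :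
    Function.Injective fun v : {v : V // v ∉ W} => s((v : V), f v) := by
  obtain ⟨d, hd⟩ := hf
  intro v u h
  rcases Sym2.eq_iff.1 h with ⟨h, -⟩ | ⟨h1, h2⟩
  · exact Subtype.ext h
  · have a := hd v
    have b := hd u
    rw [h2] at a
    rw [← h1] at b
    omega

/-- Reachability preserves every set that is closed under adjacency. -/
lemma mem_of_reachable {U : Type*} {H : SimpleGraph U} {S : Set U}
    (hS : ∀ a b, H.Adj a b → a ∈ S → b ∈ S) {a b : U} (h : H.Reachable a b) (ha : a ∈ S) :
    b ∈ S := by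
  obtain ⟨p⟩ := h
  induction p with
  | nil => exact ha
  | cons hadj _ ih => exact ih (hS _ _ hadj ha)

/-- The set of vertices that `f` eventually leads to `t` is left only through the edge from `t`
to `f t`. -/
lemma exists_iterate_iff (f : {v : V // v ∉ W} → V) (u : {v : V // v ∉ W}) {t : V}
    (hut : (u : V) ≠ t) :
    (∃ k, (ext f)^[k] u = t) ↔ ∃ k, (ext f)^[k] (f u) = t := by
  constructor
  · rintro ⟨_ | k, hk⟩
    · exact absurd hk hut
    · rw [Function.iterate_succ_apply, ext_coe] at hk
      exact ⟨k, hk⟩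
  · rintro ⟨k, hk⟩
    refine ⟨k + 1, ?_⟩
    rwa [Function.iterate_succ_apply, ext_coe]

lemma potential_iterate_le {f : {v : V // v ∉ W} → V} {d : V → ℕ}
    (hd : ∀ v : {v : V // v ∉ W}, d (f v) < d v) (k : ℕ) (u : V) :
    d ((ext f)^[k] u) ≤ d u := by
  induction k generalizing u with
  | zero => exact le_rfl
  | succ k ih =>
    rw [Function.iterate_succ_apply]
    refine (ih _).trans ?_
    by_cases hu : u ∈ W
    · rw [ext_of_mem f hu]
    · exact (ext_coe f ⟨u, hu⟩ ▸ hd ⟨u, hu⟩).le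

/-- Each edge `s(v, f v)` is a bridge: the vertices that `f` eventually leads to `v` are on one
side of it, and `f v` is on the other. -/
lemma stepEdges_acyclic [Fintype V] {f : {v : V // v ∉ W} → V} (hf : Good f) :
    (SimpleGraph.fromEdgeSet (↑(stepEdges f) : Set (Sym2 V))).IsAcyclic := by
  obtain ⟨d, hd⟩ := hf
  rw [SimpleGraph.isAcyclic_iff_forall_isBridge]
  intro e he
  rw [SimpleGraph.edgeSet_fromEdgeSet] at he
  obtain ⟨v, rfl⟩ := mem_stepEdges.1 (Finset.mem_coe.1 he.1)
  rw [SimpleGraph.isBridge_iff]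
  intro hr
  have hmem : f v ∈ {u : V | ∃ k, (ext f)^[k] u = v} := by
    refine mem_of_reachable ?_ hr ⟨0, rfl⟩
    intro a b hab ha
    rw [SimpleGraph.deleteEdges_adj, SimpleGraph.fromEdgeSet_adj] at hab
    obtain ⟨⟨hab, -⟩, hne⟩ := hab
    obtain ⟨u, hu⟩ := mem_stepEdges.1 (Finset.mem_coe.1 hab)
    have huv : (u : V) ≠ v := by
      intro h
      rw [Subtype.ext h] at hu
      exact hne hu.symm
    have key := exists_iterate_iff f u huv
    rcases Sym2.eq_iff.1 hu with ⟨rfl, rfl⟩ | ⟨rfl, rfl⟩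
    · exact key.1 ha
    · exact key.2 ha
  obtain ⟨k, hk⟩ := hmem
  have h1 := potential_iterate_le hd k (f v)
  rw [hk] at h1
  exact absurd (hd v) (not_lt.2 h1)

lemma Good.adj [Fintype V] {f : {v : V // v ∉ W} → V} (hf : Good f) (v : {v : V // v ∉ W}) :
    (SimpleGraph.fromEdgeSet (↑(stepEdges f) : Set (Sym2 V))).Adj v (f v) := by
  obtain ⟨d, hd⟩ := hf
  rw [SimpleGraph.fromEdgeSet_adj]
  refine ⟨Finset.mem_coe.2 (mem_stepEdges.2 ⟨v, rfl⟩), fun h => ?_⟩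
  have := hd v
  rw [← h] at this
  exact lt_irrefl _ this

lemma Good.exists_reachable [Fintype V] {f : {v : V // v ∉ W} → V} (hf : Good f) (v : V) :
    ∃ w ∈ W, (SimpleGraph.fromEdgeSet (↑(stepEdges f) : Set (Sym2 V))).Reachable v w := by
  obtain ⟨d, hd⟩ := id hf
  induction hn : d v using Nat.strong_induction_on generalizing v with
  | _ n ih =>
    by_cases hv : v ∈ W
    · exact ⟨v, hv, SimpleGraph.Reachable.refl _⟩
    · obtain ⟨w, hw, hr⟩ := ih _ (hn ▸ hd ⟨v, hv⟩) (f ⟨v, hv⟩) rfl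
      exact ⟨w, hw, (hf.adj ⟨v, hv⟩).reachable.trans hr⟩

lemma stepEdges_existsUnique [Fintype V] {f : {v : V // v ∉ W} → V} (hf : Good f) (v : V) :
    ∃! w : V, w ∈ W ∧
      (SimpleGraph.fromEdgeSet (↑(stepEdges f) : Set (Sym2 V))).Reachable v w := by
  obtain ⟨w, hw, hr⟩ := hf.exists_reachable v
  refine ⟨w, ⟨hw, hr⟩, ?_⟩
  rintro w' ⟨hw', hr'⟩
  have hmem : w' ∈ {u : V | ∃ k, (ext f)^[k] u = w} := by
    refine mem_of_reachable ?_ (hr.symm.trans hr') ⟨0, rfl⟩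
    intro a b hab ha
    rw [SimpleGraph.fromEdgeSet_adj] at hab
    obtain ⟨u, hu⟩ := mem_stepEdges.1 (Finset.mem_coe.1 hab.1)
    have key := exists_iterate_iff f u (t := w) (fun h => u.2 (h ▸ hw))
    rcases Sym2.eq_iff.1 hu with ⟨rfl, rfl⟩ | ⟨rfl, rfl⟩
    · exact key.1 ha
    · exact key.2 ha
  obtain ⟨k, hk⟩ := hmem
  rwa [iterate_ext_of_mem f hw'] at hk

/-- If `f v ≠ f' v`, then the edge `s(v, f v)` can come from `f'` only as `s(u, f' u)` with
`u = f v` and `f' u = v`. Induction on the potential gives `f u = f' u = v`, and `f` would swap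
`u` and `v`. -/
lemma stepEdges_injective [Fintype V] {f f' : {v : V // v ∉ W} → V} (hf : Good f)
    (h : stepEdges f = stepEdges f') : f = f' := by
  obtain ⟨d, hd⟩ := hf
  funext v
  induction hn : d v using Nat.strong_induction_on generalizing v with
  | _ n ih =>
    have hmem : s((v : V), f v) ∈ stepEdges f' := h ▸ mem_stepEdges.2 ⟨v, rfl⟩
    obtain ⟨u, hu⟩ := mem_stepEdges.1 hmem
    rcases Sym2.eq_iff.1 hu with ⟨h1, h2⟩ | ⟨h1, h2⟩
    · rw [← h2, Subtype.ext h1]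
    · have huv : d u < d v := h1 ▸ hd v
      have h3 := ih _ (hn ▸ huv) u rfl
      have h4 := hd u
      rw [h3, h2] at h4
      omega

/-! ### The map of a rooted forest -/

/-- The map moves each vertex to a neighbour that is closer to its root. Every edge of the forest
is used, since any other edge would join two vertices that are already connected to the same root,
and would not be a bridge. -/
lemma exists_good_stepEdges_eq [Fintype V] (F : Finset (Sym2 V)) (hdiag : ∀ e ∈ F, ¬ e.IsDiag)
    (hac : (SimpleGraph.fromEdgeSet (↑F : Set (Sym2 V))).IsAcyclic)
    (hW : ∀ v : V, ∃! w : V, w ∈ W ∧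
      (SimpleGraph.fromEdgeSet (↑F : Set (Sym2 V))).Reachable v w) :
    ∃ f : {v : V // v ∉ W} → V, Good f ∧ stepEdges f = F := by
  set H := SimpleGraph.fromEdgeSet (↑F : Set (Sym2 V)) with hH
  choose r hr hr' using hW
  simp only [and_imp] at hr hr'
  have hradj : ∀ a b, H.Adj a b → r a = r b := fun a b hab =>
    hr' b _ (hr a).1 (hab.symm.reachable.trans (hr a).2)
  have hnext : ∀ v : {v : V // v ∉ W}, ∃ u, H.Adj v u ∧ H.dist u (r v) < H.dist v (r v) := by
    intro v
    obtain ⟨p, hp⟩ := (hr v).2.exists_walk_length_eq_dist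
    have hne : (v : V) ≠ r v := fun h => v.2 (h ▸ (hr v).1)
    generalize r v = t at p hp hne
    cases p with
    | nil => exact absurd rfl hne
    | cons hadj q =>
      refine ⟨_, hadj, ?_⟩
      rw [← hp, SimpleGraph.Walk.length_cons]
      exact Nat.lt_succ_of_le (SimpleGraph.dist_le q)
  choose f hf hlt using hnext
  have hgood : Good f := ⟨fun v => H.dist v (r v), fun v => by
    show H.dist (f v) (r (f v)) < H.dist v (r v)
    rw [← hradj _ _ (hf v)]
    exact hlt v⟩
  have hsub : stepEdges f ⊆ F := by
    intro e he
    obtain ⟨v, rfl⟩ := mem_stepEdges.1 he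
    have := hf v
    rw [hH, SimpleGraph.fromEdgeSet_adj] at this
    exact Finset.mem_coe.1 this.1
  refine ⟨f, hgood, Finset.Subset.antisymm hsub ?_⟩
  intro e he
  by_contra hnot
  induction e with
  | _ a b =>
  have hle : SimpleGraph.fromEdgeSet (↑(stepEdges f) : Set (Sym2 V)) ≤ H.deleteEdges {s(a, b)} := by
    intro c e hce
    rw [SimpleGraph.fromEdgeSet_adj] at hce
    rw [SimpleGraph.deleteEdges_adj, hH, SimpleGraph.fromEdgeSet_adj]
    refine ⟨⟨hsub hce.1, hce.2⟩, fun h => hnot ?_⟩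
    rw [← Set.mem_singleton_iff.1 h]
    exact hce.1
  have hleH : SimpleGraph.fromEdgeSet (↑(stepEdges f) : Set (Sym2 V)) ≤ H :=
    hle.trans (SimpleGraph.deleteEdges_le _)
  have hab : H.Adj a b := by
    rw [hH, SimpleGraph.fromEdgeSet_adj]
    exact ⟨he, fun h => hdiag _ he (Sym2.mk_isDiag_iff.2 h)⟩
  have hbr := SimpleGraph.isAcyclic_iff_forall_isBridge.1 hac (e := s(a, b)) hab
  rw [SimpleGraph.isBridge_iff] at hbr
  obtain ⟨w, hw, hw1⟩ := hgood.exists_reachable a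
  obtain ⟨w', hw', hw1'⟩ := hgood.exists_reachable b
  have e1 : w = r a := hr' a w hw (hw1.mono hleH)
  have e2 : w' = r b := hr' b w' hw' (hw1'.mono hleH)
  have e3 : w = w' := by rw [e1, e2, hradj a b hab]
  subst e3
  exact hbr ((hw1.mono hle).trans (hw1'.mono hle).symm)

/-! ### Expansion of the minor and of the forest sum -/

lemma lap_apply [Fintype V] (G : SimpleGraph V) (x : Sym2 V → ZMod 3)
    (v w : {v : V // v ∉ W}) :
    lap G x v w = ∑ u ∈ Finset.univ.filter (fun u => G.Adj v u),
      x s((v : V), u) * ((if v = w then 1 else 0) - (if u = w then 1 else 0)) := by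
  simp only [mul_sub, Finset.sum_sub_distrib, mul_ite, mul_one, mul_zero, Finset.sum_ite_eq',
    Finset.mem_filter, Finset.mem_univ, true_and, lap]
  by_cases h : v = w
  · subst h
    simp
  · have h' : (v : V) ≠ w := fun e => h (Subtype.ext e)
    by_cases ha : G.Adj v w <;> simp [h, h', ha]

lemma det_eq_sum [Fintype V] (G : SimpleGraph V) (x : Sym2 V → ZMod 3) :
    ((lap G x).submatrix
        (fun i : {v : V // v ∉ W} => (i : V))
        (fun i : {v : V // v ∉ W} => (i : V))).det
      = ∑ f ∈ Fintype.piFinset (fun v : {v : V // v ∉ W} =>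
          Finset.univ.filter (fun u => G.Adj v u)),
        (∏ v : {v : V // v ∉ W}, x s((v : V), f v)) * (stepMatrix f).det := by
  have hrow : (lap G x).submatrix
        (fun i : {v : V // v ∉ W} => (i : V)) (fun i : {v : V // v ∉ W} => (i : V))
      = fun v : {v : V // v ∉ W} => ∑ u ∈ Finset.univ.filter (fun u => G.Adj v u),
        (fun w : {v : V // v ∉ W} =>
          x s((v : V), u) * ((if v = w then 1 else 0) - (if u = w then 1 else 0))) := by
    funext v w
    rw [Finset.sum_apply]
    exact lap_apply G x v w
  rw [hrow]
  refine ((Matrix.detRowAlternating (n := {v : V // v ∉ W})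
    (R := ZMod 3)).toMultilinearMap.map_sum_finset _ _).trans ?_
  refine Finset.sum_congr rfl fun f _ => ?_
  exact Matrix.det_mul_column (fun v : {v : V // v ∉ W} => x s((v : V), f v)) (stepMatrix f)

/-- In `contractedSum` the summation index is a `Set`, ranging over the coercions of the finsets
`F ⊆ E(G)`; this is the same sum indexed by the finsets themselves. -/
lemma contractedSum_eq [Fintype V] (G : SimpleGraph V) (x : Sym2 V → ZMod 3) :
    contractedSum G x W = ∑ F ∈ G.edgeFinset.powerset.filter (fun F : Finset (Sym2 V) =>
      (SimpleGraph.fromEdgeSet (↑F : Set (Sym2 V))).IsAcyclic ∧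
      ∀ v : V, ∃! w : V, w ∈ W ∧
        (SimpleGraph.fromEdgeSet (↑F : Set (Sym2 V))).Reachable v w),
    ∏ e ∈ F, x e := by
  rw [contractedSum]
  symm
  refine Finset.sum_bij (fun F _ => (↑F : Set (Sym2 V))) ?_ ?_ ?_ ?_
  · intro F hF
    rw [Finset.mem_filter] at hF ⊢
    refine ⟨?_, hF.2⟩
    simp only [Finset.bind_def, Finset.mem_sup, Finset.pure_def, Finset.mem_singleton]
    exact ⟨F, hF.1, rfl⟩
  · intro F _ F' _ h
    exact Finset.coe_injective h
  · intro S hS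
    rw [Finset.mem_filter] at hS
    obtain ⟨hS, hS'⟩ := hS
    simp only [Finset.bind_def, Finset.mem_sup, Finset.pure_def, Finset.mem_singleton] at hS
    obtain ⟨F, hF, rfl⟩ := hS
    exact ⟨F, Finset.mem_filter.2 ⟨hF, hS'⟩, rfl⟩
  · intro F _
    rw [Finset.toFinset_coe]

end MatrixTree

open MatrixTree in
/-- The all-minors Matrix-Tree theorem with weights in `ZMod 3`: the principal
minor of the Laplacian complementary to a nonempty vertex set `W` equals the
contracted spanning-tree sum `s(G/W;x)`. -/
theorem matrix_tree_contracted {V : Type*} [Fintype V] [DecidableEq V] (G : SimpleGraph V)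
    (x : Sym2 V → ZMod 3) (W : Finset V) (hW : W.Nonempty) :
    ((lap G x).submatrix
        (fun i : {v : V // v ∉ W} => (i : V))
        (fun i : {v : V // v ∉ W} => (i : V))).det
      = contractedSum G x W := by
  rw [det_eq_sum, contractedSum_eq]
  have hfilter : ∀ f ∈ Fintype.piFinset (fun v : {v : V // v ∉ W} =>
      Finset.univ.filter (fun u => G.Adj v u)),
      (∏ v : {v : V // v ∉ W}, x s((v : V), f v)) * (stepMatrix f).det
        = if Good f then ∏ v : {v : V // v ∉ W}, x s((v : V), f v) else 0 := by
    intro f _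
    split_ifs with hf
    · rw [det_stepMatrix_good f hf, mul_one]
    · rw [det_stepMatrix_not_good f hf, mul_zero]
  rw [Finset.sum_congr rfl hfilter, ← Finset.sum_filter]
  refine Finset.sum_bij (fun f _ => stepEdges f) ?_ ?_ ?_ ?_
  · intro f hf
    rw [Finset.mem_filter, Fintype.mem_piFinset] at hf
    rw [Finset.mem_filter, Finset.mem_powerset]
    refine ⟨fun e he => ?_, stepEdges_acyclic hf.2, stepEdges_existsUnique hf.2⟩
    obtain ⟨v, rfl⟩ := mem_stepEdges.1 he
    rw [SimpleGraph.mem_edgeFinset, SimpleGraph.mem_edgeSet]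
    exact (Finset.mem_filter.1 (hf.1 v)).2
  · intro f hf f' _ h
    exact stepEdges_injective (Finset.mem_filter.1 hf).2 h
  · intro F hF
    rw [Finset.mem_filter, Finset.mem_powerset] at hF
    obtain ⟨hFG, hac, hroot⟩ := hF
    obtain ⟨f, hf, rfl⟩ := exists_good_stepEdges_eq F
      (fun e he => G.not_isDiag_of_mem_edgeFinset (hFG he)) hac hroot
    refine ⟨f, ?_, rfl⟩
    rw [Finset.mem_filter, Fintype.mem_piFinset]
    refine ⟨fun v => Finset.mem_filter.2 ⟨Finset.mem_univ _, ?_⟩, hf⟩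
    have := hFG (mem_stepEdges.2 ⟨v, rfl⟩)
    rwa [SimpleGraph.mem_edgeFinset, SimpleGraph.mem_edgeSet] at this
  · intro f hf
    rw [stepEdges, Finset.prod_image]
    exact fun a _ b _ h => (Finset.mem_filter.1 hf).2.edge_injective h
end
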